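/- arXiv:1908.09193 — 2 statements merged into one kernel-verified Lean document; each statement's English description precedes it below -/
import Mathlib

section
/- Let D = ([0,1] × [1,2]) ∪ [0,1]² ∪ ([1,2] × [0,1]) ⊂ ℝ² and D' = ([−1,0] × [0,1]) ∪ [0,1]² ∪ ([1,2] × [0,1]) ⊂ ℝ². Then there exists a bilipschitz homeomorphism φ : D → D' such that φ restricted to {2} × [0,1] is the identity and φ restricted to [0,1] × {2} is an isometry onto {−1} × [0,1]. -/
open Set

noncomputable section

/-- ℝ² with the Euclidean metric. -/
abbrev E2 := EuclideanSpace ℝ (Fin 2)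

/-- The L-shaped union of three unit squares
`D = ([0,1] × [1,2]) ∪ [0,1]² ∪ ([1,2] × [0,1])`. -/
def Dset : Set E2 :=
  {x | (x 0 ∈ Icc (0:ℝ) 1 ∧ x 1 ∈ Icc (1:ℝ) 2) ∨ (x 0 ∈ Icc (0:ℝ) 1 ∧ x 1 ∈ Icc (0:ℝ) 1) ∨
    (x 0 ∈ Icc (1:ℝ) 2 ∧ x 1 ∈ Icc (0:ℝ) 1)}

/-- The straight row of three unit squares
`D' = ([−1,0] × [0,1]) ∪ [0,1]² ∪ ([1,2] × [0,1])`. -/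
def D'set : Set E2 :=
  {x | (x 0 ∈ Icc (-1:ℝ) 0 ∧ x 1 ∈ Icc (0:ℝ) 1) ∨ (x 0 ∈ Icc (0:ℝ) 1 ∧ x 1 ∈ Icc (0:ℝ) 1) ∨
    (x 0 ∈ Icc (1:ℝ) 2 ∧ x 1 ∈ Icc (0:ℝ) 1)}

/-- The segment `{2} × [0,1]`. -/
def segTwo : Set E2 := {x | x 0 = 2 ∧ x 1 ∈ Icc (0:ℝ) 1}

/-- The segment `[0,1] × {2}`. -/
def segTop : Set E2 := {x | x 0 ∈ Icc (0:ℝ) 1 ∧ x 1 = 2}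

/-- The segment `{−1} × [0,1]`. -/
def segLeft : Set E2 := {x | x 0 = -1 ∧ x 1 ∈ Icc (0:ℝ) 1}

/-- The map straightening `D` onto `D'`: the point with `u = x 0 - x 1` and `v = min (x 0) (x 1)`
goes to height `v`, and the range `|u| ≤ 2 - v` is stretched piecewise linearly onto `[-1, 2]`. -/
def straighten (x : E2) : E2 :=
  !₂[3 / 4 * max (min (x 0 - x 1 + min (x 0) (x 1)) (2 * (x 0 - x 1)))
      (x 0 - x 1 - min (x 0) (x 1)) + 1 / 2, min (x 0) (x 1)]

/-- The value of `x 0 - x 1` at the point of `D` straightened to `y`. -/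
def bendDiff (y : E2) : ℝ :=
  min (max (4 / 3 * (y 0 - 1 / 2) - y 1) (2 / 3 * (y 0 - 1 / 2))) (4 / 3 * (y 0 - 1 / 2) + y 1)

/-- The inverse of `straighten`, bending `D'` back onto `D`. -/
def bend (y : E2) : E2 :=
  !₂[y 1 + max (bendDiff y) 0, y 1 + max (-bendDiff y) 0]

lemma LipschitzWith.exists_const_mul {α : Type*} [PseudoEMetricSpace α] {f : α → ℝ} (c : ℝ)
    (hf : ∃ K, LipschitzWith K f) : ∃ K, LipschitzWith K fun x => c * f x :=
  let ⟨_, h⟩ := hf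
  ⟨_, (lipschitzWith_smul c).comp h⟩

lemma LipschitzWith.exists_add {α : Type*} [PseudoEMetricSpace α] {f g : α → ℝ}
    (hf : ∃ K, LipschitzWith K f) (hg : ∃ K, LipschitzWith K g) :
    ∃ K, LipschitzWith K fun x => f x + g x :=
  let ⟨_, h⟩ := hf
  let ⟨_, h'⟩ := hg
  ⟨_, h.add h'⟩

lemma LipschitzWith.exists_sub {α : Type*} [PseudoEMetricSpace α] {f g : α → ℝ}
    (hf : ∃ K, LipschitzWith K f) (hg : ∃ K, LipschitzWith K g) :
    ∃ K, LipschitzWith K fun x => f x - g x :=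
  let ⟨_, h⟩ := hf
  let ⟨_, h'⟩ := hg
  ⟨_, h.sub h'⟩

lemma LipschitzWith.exists_min {α : Type*} [PseudoEMetricSpace α] {f g : α → ℝ}
    (hf : ∃ K, LipschitzWith K f) (hg : ∃ K, LipschitzWith K g) :
    ∃ K, LipschitzWith K fun x => min (f x) (g x) :=
  let ⟨_, h⟩ := hf
  let ⟨_, h'⟩ := hg
  ⟨_, h.min h'⟩

lemma LipschitzWith.exists_max {α : Type*} [PseudoEMetricSpace α] {f g : α → ℝ}
    (hf : ∃ K, LipschitzWith K f) (hg : ∃ K, LipschitzWith K g) :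
    ∃ K, LipschitzWith K fun x => max (f x) (g x) :=
  let ⟨_, h⟩ := hf
  let ⟨_, h'⟩ := hg
  ⟨_, h.max h'⟩

lemma LipschitzWith.exists_const_real {α : Type*} [PseudoEMetricSpace α] (c : ℝ) :
    ∃ K, LipschitzWith K fun _ : α => c :=
  ⟨0, LipschitzWith.const c⟩

lemma exists_lipschitzWith_coord (i : Fin 2) : ∃ K, LipschitzWith K fun x : E2 => x i :=
  ⟨1, LipschitzWith.of_dist_le_mul fun x y => by
    simpa [dist_eq_norm] using PiLp.norm_apply_le (x - y) i⟩

lemma exists_lipschitzWith_mk {α : Type*} [PseudoEMetricSpace α] {f g : α → ℝ}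
    (hf : ∃ K, LipschitzWith K f) (hg : ∃ K, LipschitzWith K g) :
    ∃ K, LipschitzWith K fun x => (!₂[f x, g x] : E2) := by
  obtain ⟨K, h⟩ := hf
  obtain ⟨K', h'⟩ := hg
  have hpi : LipschitzWith (max K K') fun x => ![f x, g x] := by
    intro x y
    rw [edist_pi_le_iff]
    intro i
    fin_cases i
    · exact h.weaken (le_max_left _ _) x y
    · exact h'.weaken (le_max_right _ _) x y
  exact ⟨_, (PiLp.lipschitzWith_toLp 2 fun _ : Fin 2 => ℝ).comp hpi⟩

open LipschitzWith in
lemma exists_lipschitzWith_straighten : ∃ K, LipschitzWith K straighten := by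
  have h0 := exists_lipschitzWith_coord 0
  have h1 := exists_lipschitzWith_coord 1
  have hu := exists_sub h0 h1
  have hv := exists_min h0 h1
  exact exists_lipschitzWith_mk
    (exists_add (exists_const_mul _ (exists_max (exists_min (exists_add hu hv)
      (exists_const_mul _ hu)) (exists_sub hu hv))) (exists_const_real _)) hv

open LipschitzWith in
lemma exists_lipschitzWith_bend : ∃ K, LipschitzWith K bend := by
  have h1 := exists_lipschitzWith_coord 1
  have hs := exists_sub (exists_lipschitzWith_coord 0) (exists_const_real (1 / 2))
  have hu : ∃ K, LipschitzWith K bendDiff :=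
    exists_min (exists_max (exists_sub (exists_const_mul _ hs) h1) (exists_const_mul _ hs))
      (exists_add (exists_const_mul _ hs) h1)
  have hn : ∃ K, LipschitzWith K fun y => -bendDiff y :=
    let ⟨K, h⟩ := hu
    ⟨K, h.neg⟩
  exact exists_lipschitzWith_mk (exists_add h1 (exists_max hu (exists_const_real 0)))
    (exists_add h1 (exists_max hn (exists_const_real 0)))

lemma mem_Dset_iff {x : E2} :
    x ∈ Dset ↔ 0 ≤ x 0 ∧ x 0 ≤ 2 ∧ 0 ≤ x 1 ∧ x 1 ≤ 2 ∧ min (x 0) (x 1) ≤ 1 := by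
  simp only [Dset, mem_ofPred_eq, mem_Icc]
  grind

lemma mem_D'set_iff {y : E2} :
    y ∈ D'set ↔ -1 ≤ y 0 ∧ y 0 ≤ 2 ∧ 0 ≤ y 1 ∧ y 1 ≤ 1 := by
  simp only [D'set, mem_ofPred_eq, mem_Icc]
  grind

lemma straighten_zero (x : E2) : straighten x 0 =
    3 / 4 * max (min (x 0 - x 1 + min (x 0) (x 1)) (2 * (x 0 - x 1)))
      (x 0 - x 1 - min (x 0) (x 1)) + 1 / 2 := rfl

lemma straighten_one (x : E2) : straighten x 1 = min (x 0) (x 1) := rfl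

lemma bend_zero (y : E2) : bend y 0 = y 1 + max (bendDiff y) 0 := rfl

lemma bend_one (y : E2) : bend y 1 = y 1 + max (-bendDiff y) 0 := rfl

lemma E2.ext {x y : E2} (h0 : x 0 = y 0) (h1 : x 1 = y 1) : x = y := by
  ext i
  fin_cases i
  exacts [h0, h1]

lemma straighten_mapsTo : MapsTo straighten Dset D'set := by
  intro x hx
  rw [mem_Dset_iff] at hx
  rw [mem_D'set_iff, straighten_zero, straighten_one]
  grind

lemma bend_mapsTo : MapsTo bend D'set Dset := by
  intro y hy
  rw [mem_D'set_iff] at hy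
  rw [mem_Dset_iff, bend_zero, bend_one, bendDiff]
  grind

lemma bendDiff_straighten {x : E2} (hx : x ∈ Dset) : bendDiff (straighten x) = x 0 - x 1 := by
  rw [mem_Dset_iff] at hx
  rw [bendDiff, straighten_zero, straighten_one]
  grind

lemma bend_leftInvOn : LeftInvOn bend straighten Dset := by
  intro x hx
  apply E2.ext
  · rw [bend_zero, bendDiff_straighten hx, straighten_one]
    grind
  · rw [bend_one, bendDiff_straighten hx, straighten_one]
    grind

lemma bend_rightInvOn : RightInvOn bend straighten D'set := by
  intro y hy
  rw [mem_D'set_iff] at hy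
  have hd : bend y 0 - bend y 1 = bendDiff y := by
    rw [bend_zero, bend_one]
    grind
  have hm : min (bend y 0) (bend y 1) = y 1 := by
    rw [bend_zero, bend_one]
    grind
  apply E2.ext
  · rw [straighten_zero, hd, hm, bendDiff]
    grind
  · rw [straighten_one, hm]

lemma straighten_of_mem_segTwo {x : E2} (hx : x ∈ segTwo) : straighten x = x := by
  obtain ⟨h0, h1, h1'⟩ := hx
  apply E2.ext
  · rw [straighten_zero, h0]
    grind
  · rw [straighten_one]
    exact min_eq_right (by linarith)

lemma straighten_of_mem_segTop {x : E2} (hx : x ∈ segTop) : straighten x = !₂[-1, x 0] := by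
  obtain ⟨⟨h0, h0'⟩, h1⟩ := hx
  apply E2.ext
  · change straighten x 0 = -1
    rw [straighten_zero, h1]
    grind
  · change straighten x 1 = x 0
    rw [straighten_one]
    exact min_eq_left (by linarith)

/-- There is a bilipschitz homeomorphism `φ : D → D'` which is the identity on
`{2} × [0,1]` and an isometry of `[0,1] × {2}` onto `{−1} × [0,1]`. -/
theorem exists_bilipschitz_straightening :
    ∃ φ : E2 → E2,
      Set.BijOn φ Dset D'set ∧ ContinuousOn φ Dset ∧
      (∃ L : ℝ, 1 ≤ L ∧ ∀ a ∈ Dset, ∀ b ∈ Dset,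
        L⁻¹ * dist a b ≤ dist (φ a) (φ b) ∧ dist (φ a) (φ b) ≤ L * dist a b) ∧
      (∀ x ∈ segTwo, φ x = x) ∧
      φ '' segTop = segLeft ∧
      (∀ a ∈ segTop, ∀ b ∈ segTop, dist (φ a) (φ b) = dist a b) := by
  obtain ⟨K, hK⟩ := exists_lipschitzWith_straighten
  obtain ⟨K', hK'⟩ := exists_lipschitzWith_bend
  refine ⟨straighten, ⟨straighten_mapsTo, bend_leftInvOn.injOn,
    bend_rightInvOn.surjOn bend_mapsTo⟩, hK.continuous.continuousOn,
    ⟨max 1 (max K K'), le_max_left _ _, fun a ha b hb => ⟨?_, ?_⟩⟩,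
    fun x => straighten_of_mem_segTwo, ?_, fun a ha b hb => ?_⟩
  · rw [inv_mul_le_iff₀ (lt_of_lt_of_le one_pos (le_max_left _ _))]
    calc dist a b = dist (bend (straighten a)) (bend (straighten b)) := by
          rw [bend_leftInvOn ha, bend_leftInvOn hb]
      _ ≤ K' * dist (straighten a) (straighten b) := hK'.dist_le_mul _ _
      _ ≤ _ := by
          gcongr
          exact (le_max_right _ _).trans (le_max_right _ _)
  · refine (hK.dist_le_mul a b).trans ?_
    gcongr
    exact (le_max_left _ _).trans (le_max_right _ _)
  · apply Subset.antisymm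
    · rintro _ ⟨x, hx, rfl⟩
      rw [straighten_of_mem_segTop hx]
      exact ⟨rfl, hx.1⟩
    · intro y hy
      have hx : (!₂[y 1, 2] : E2) ∈ segTop := ⟨hy.2, rfl⟩
      refine ⟨_, hx, ?_⟩
      rw [straighten_of_mem_segTop hx]
      exact E2.ext hy.1.symm rfl
  · rw [straighten_of_mem_segTop ha, straighten_of_mem_segTop hb, EuclideanSpace.dist_eq,
      EuclideanSpace.dist_eq]
    simp [Fin.sum_univ_two, ha.2, hb.2]
end
end

section
/- Let f : ℝ³ → ℝ³ be an orientation-preserving homeomorphism with f ∘ f = id which is locally bilipschitz on the complement of a closed Lebesgue-null set E ⊂ ℝ³ satisfying f(E) = E. Then f is differentiable almost everywhere with Jacobian determinant J_f = det Df > 0 a.e., and for every p ∈ [1, 2) the identity ∫_{ℝ³} |Df(x)|^p dx = ∫_{ℝ³} |D^♯f(y)|^p / J_f(y)^{p−1} dy holds (both sides possibly infinite), where D^♯f denotes the adjugate (cofactor) matrix of the differential Df. -/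
open MeasureTheory Set

noncomputable section

/-- ℝ³ with the Euclidean metric and Lebesgue measure. -/
abbrev E3 := EuclideanSpace ℝ (Fin 3)

/-- The Jacobian determinant `J_f(x) = det Df(x)` of `f` at `x`. -/
def jacDet (f : E3 → E3) (x : E3) : ℝ := (fderiv ℝ f x).det

/-- The operator norm of (the linear map associated to) the adjugate (cofactor) matrix
`D^♯f(x)` of the differential `Df(x)`. -/
def adjugateNorm (f : E3 → E3) (x : E3) : ℝ :=
  ‖Matrix.toEuclideanCLM (𝕜 := ℝ)
    ((LinearMap.toMatrix (EuclideanSpace.basisFun (Fin 3) ℝ).toBasis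
      (EuclideanSpace.basisFun (Fin 3) ℝ).toBasis (fderiv ℝ f x)).adjugate)‖

/-- A homeomorphism `f : ℝ³ → ℝ³` is orientation-preserving when `det Df(x) ≥ 0` at every
point of differentiability. -/
def OrientPreserving (f : E3 → E3) : Prop :=
  ∀ x : E3, DifferentiableAt ℝ f x → 0 ≤ jacDet f x

/-- A lower Lipschitz bound near `x` passes to the derivative at `x`. -/
theorem HasFDerivAt.le_norm_apply_of_eventually_le {V W : Type*} [NormedAddCommGroup V]
    [NormedSpace ℝ V] [NormedAddCommGroup W] [NormedSpace ℝ W] {g : V → W} {A : V →L[ℝ] W}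
    {x : V} {c : ℝ} (hg : HasFDerivAt g A x)
    (hc : ∀ᶠ y in nhds x, c * ‖y - x‖ ≤ ‖g y - g x‖) (v : V) : c * ‖v‖ ≤ ‖A v‖ := by
  have hlim := (hasDerivAt_iff_tendsto_slope_zero.1 (hg.hasLineDerivAt v)).norm
  refine ge_of_tendsto hlim ?_
  have hcont : Filter.Tendsto (fun t : ℝ => x + t • v) (nhdsWithin 0 {0}ᶜ) (nhds x) := by
    have : Continuous fun t : ℝ => x + t • v := by fun_prop
    simpa using (this.tendsto 0).mono_left nhdsWithin_le_nhds
  filter_upwards [hcont.eventually hc, self_mem_nhdsWithin] with t ht ht0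
  have ht' : 0 < |t| := abs_pos.2 ht0
  rw [add_sub_cancel_left, norm_smul, Real.norm_eq_abs] at ht
  simp only [zero_add, zero_smul, add_zero, norm_smul, norm_inv, Real.norm_eq_abs]
  rw [le_inv_mul_iff₀ ht']
  linarith

/-- The adjugate of an invertible differential is the determinant times the inverse. -/
theorem adjugateNorm_eq_abs_jacDet_mul_norm {f : E3 → E3} {x : E3} {B : E3 →L[ℝ] E3}
    (hB : (fderiv ℝ f x).comp B = ContinuousLinearMap.id ℝ E3) :
    adjugateNorm f x = |jacDet f x| * ‖B‖ := by
  set b := (EuclideanSpace.basisFun (Fin 3) ℝ).toBasis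
  set M := LinearMap.toMatrix b b (fderiv ℝ f x) with hM
  set N := LinearMap.toMatrix b b B with hN
  have hMN : M * N = 1 := by
    have hlin : (fderiv ℝ f x : E3 →ₗ[ℝ] E3) ∘ₗ (B : E3 →ₗ[ℝ] E3) = LinearMap.id :=
      LinearMap.ext fun v => DFunLike.congr_fun hB v
    rw [hM, hN, ← LinearMap.toMatrix_comp b b b, hlin, LinearMap.toMatrix_id]
  have hdet : M.det = jacDet f x := LinearMap.det_toMatrix b _
  have hadj : M.adjugate = jacDet f x • N := by
    rw [← mul_one M.adjugate, ← hMN, ← mul_assoc, Matrix.adjugate_mul, hdet, smul_mul_assoc,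
      one_mul]
  have hCLM : Matrix.toEuclideanCLM (𝕜 := ℝ) N = B := by
    apply ContinuousLinearMap.coe_injective
    rw [Matrix.coe_toEuclideanCLM_eq_toEuclideanLin,
      Matrix.toEuclideanLin_eq_toLin_orthonormal]
    exact Matrix.toLin_toMatrix b b _
  change ‖Matrix.toEuclideanCLM (𝕜 := ℝ) M.adjugate‖ = _
  rw [hadj, map_smul, hCLM, norm_smul, Real.norm_eq_abs]

/-- A map that is locally Lipschitz on a set is differentiable at almost every point of it. -/
theorem measure_not_differentiableAt_eq_zero {f : E3 → E3} {s : Set E3}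
    (h : ∀ x ∈ s, ∃ U : Set E3, IsOpen U ∧ x ∈ U ∧ ∃ K, LipschitzOnWith K f U) :
    volume {x ∈ s | ¬ DifferentiableAt ℝ f x} = 0 := by
  refine measure_null_of_locally_null _ fun x hx => ?_
  obtain ⟨U, hUo, hxU, K, hK⟩ := h x hx.1
  refine ⟨{y | ¬ (y ∈ U → DifferentiableWithinAt ℝ f U y)} ∩ {y | ¬ DifferentiableAt ℝ f y}, ?_,
    measure_mono_null inter_subset_left (ae_iff.1 hK.ae_differentiableWithinAt_of_mem)⟩
  filter_upwards [mem_nhdsWithin_of_mem_nhds (hUo.mem_nhds hxU), self_mem_nhdsWithin]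
    with y hyU hy
  exact ⟨fun hyd => hy.2 ((hyd hyU).differentiableAt (hUo.mem_nhds hyU)), hy.2⟩

/-- An involution whose derivative at `x` is injective is differentiable at its image, with the
inverse derivative. -/
theorem Homeomorph.exists_hasFDerivAt_inverse_of_involutive {f : E3 ≃ₜ E3}
    (hinv : ∀ x, f (f x) = x) {x : E3} (hd : DifferentiableAt ℝ f x)
    (hinj : Function.Injective (fderiv ℝ f x)) :
    ∃ B : E3 →L[ℝ] E3, HasFDerivAt f B (f x) ∧
      (fderiv ℝ f x).comp B = ContinuousLinearMap.id ℝ E3 := by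
  let A := (LinearEquiv.ofInjectiveEndo
    (fderiv ℝ f x : E3 →ₗ[ℝ] E3) hinj).toContinuousLinearEquiv
  have hA : (A : E3 →L[ℝ] E3) = fderiv ℝ f x := by
    ext1 v
    rfl
  refine ⟨A.symm, ?_, ?_⟩
  · refine HasFDerivAt.of_local_left_inverse (f := f) f.continuous.continuousAt ?_
      (Filter.Eventually.of_forall hinv)
    rw [hA, hinv]
    exact hd.hasFDerivAt
  · rw [← hA]
    exact A.coe_comp_coe_symm

/-- Let `f : ℝ³ → ℝ³` be an orientation-preserving homeomorphism with `f ∘ f = id` which is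
locally bilipschitz on the complement of a closed Lebesgue-null set `E` with `f(E) = E`.
Then `f` is differentiable a.e. with `J_f > 0` a.e., and for every `p ∈ [1,2)`
`∫ |Df|^p = ∫ |D^♯f|^p / J_f^{p−1}` (both sides possibly infinite). -/
theorem involution_adjugate_identity
    (f : E3 ≃ₜ E3) (hinv : ∀ x, f (f x) = x)
    (hor : OrientPreserving f)
    (E : Set E3) (hEclosed : IsClosed E) (hEnull : volume E = 0) (hEinv : f '' E = E)
    (hbilip : ∀ x ∈ Eᶜ, ∃ U : Set E3, IsOpen U ∧ x ∈ U ∧ U ⊆ Eᶜ ∧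
      ∃ L : ℝ, 1 ≤ L ∧ ∀ a ∈ U, ∀ b ∈ U,
        L⁻¹ * dist a b ≤ dist (f a) (f b) ∧ dist (f a) (f b) ≤ L * dist a b) :
    (∀ᵐ x ∂volume, DifferentiableAt ℝ f x) ∧
    (∀ᵐ x ∂volume, 0 < jacDet f x) ∧
    ∀ p : ℝ, 1 ≤ p → p < 2 →
      ∫⁻ x, ENNReal.ofReal (‖fderiv ℝ f x‖ ^ p) ∂volume =
        ∫⁻ y, ENNReal.ofReal (adjugateNorm f y ^ p / jacDet f y ^ (p - 1)) ∂volume := by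
  have hEmem : ∀ x ∈ Eᶜ, f x ∈ Eᶜ := fun x hx hfx =>
    hx (by rw [← hEinv]; exact ⟨f x, hfx, hinv x⟩)
  set S : Set E3 := {x | x ∈ Eᶜ ∧ DifferentiableAt ℝ f x} with hS
  have hSmeas : MeasurableSet S :=
    hEclosed.measurableSet.compl.inter (measurableSet_of_differentiableAt ℝ f)
  have hSae : ∀ᵐ x ∂volume, x ∈ S := by
    have hnd : volume {x ∈ Eᶜ | ¬ DifferentiableAt ℝ f x} = 0 := by
      refine measure_not_differentiableAt_eq_zero fun x hx => ?_
      obtain ⟨U, hUo, hxU, -, L, hL, hU⟩ := hbilip x hx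
      refine ⟨U, hUo, hxU, L.toNNReal, LipschitzOnWith.of_dist_le_mul fun a ha b hb => ?_⟩
      rw [Real.coe_toNNReal _ (by linarith)]
      exact (hU a ha b hb).2
    filter_upwards [measure_eq_zero_iff_ae_notMem.1 hEnull,
      measure_eq_zero_iff_ae_notMem.1 hnd] with x hxE hxd
    exact ⟨hxE, by_contra fun h => hxd ⟨hxE, h⟩⟩
  have hinverse : ∀ x ∈ S, ∃ B : E3 →L[ℝ] E3, HasFDerivAt f B (f x) ∧
      (fderiv ℝ f x).comp B = ContinuousLinearMap.id ℝ E3 := by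
    rintro x ⟨hxE, hxd⟩
    obtain ⟨U, hUo, hxU, -, L, hL, hU⟩ := hbilip x hxE
    refine Homeomorph.exists_hasFDerivAt_inverse_of_involutive hinv hxd ?_
    refine (injective_iff_map_eq_zero _).2 fun v hv => ?_
    have hle := hxd.hasFDerivAt.le_norm_apply_of_eventually_le (c := L⁻¹) (by
      filter_upwards [hUo.mem_nhds hxU] with y hy
      simpa only [dist_eq_norm] using (hU y hy x hxU).1) v
    rw [hv, norm_zero] at hle
    have hLpos : 0 < L⁻¹ := inv_pos.2 (by linarith)
    exact norm_le_zero_iff.1 (nonpos_of_mul_nonpos_right hle hLpos)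
  have hpos : ∀ x ∈ S, 0 < jacDet f x := by
    intro x hx
    obtain ⟨B, -, hB⟩ := hinverse x hx
    refine lt_of_le_of_ne (hor x hx.2) fun h0 => ?_
    have hdet : jacDet f x * B.det = 1 := by
      have := congrArg ContinuousLinearMap.det hB
      simpa [jacDet, ContinuousLinearMap.det, LinearMap.det_comp] using this
    rw [← h0, zero_mul] at hdet
    exact zero_ne_one hdet
  have hfS : f '' S = S := by
    have hsub : ∀ x ∈ S, f x ∈ S := fun x hx =>
      let ⟨_, hB, _⟩ := hinverse x hx
      ⟨hEmem x hx.1, hB.differentiableAt⟩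
    exact Subset.antisymm (image_subset_iff.2 hsub) fun x hx => ⟨f x, hsub x hx, hinv x⟩
  refine ⟨hSae.mono fun x hx => hx.2, hSae.mono hpos, fun p _ _ => ?_⟩
  have hrestrict : (volume : Measure E3).restrict S = volume :=
    Measure.restrict_eq_self_of_ae_mem hSae
  calc ∫⁻ x, ENNReal.ofReal (‖fderiv ℝ f x‖ ^ p) ∂volume
      = ∫⁻ x in f '' S, ENNReal.ofReal (‖fderiv ℝ f x‖ ^ p) ∂volume := by rw [hfS, hrestrict]
    _ = ∫⁻ y in S, ENNReal.ofReal |(fderiv ℝ f y).det| *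
          ENNReal.ofReal (‖fderiv ℝ f (f y)‖ ^ p) ∂volume :=
        lintegral_image_eq_lintegral_abs_det_fderiv_mul volume hSmeas
          (fun x hx => hx.2.hasFDerivAt.hasFDerivWithinAt) f.injective.injOn _
    _ = ∫⁻ y in S, ENNReal.ofReal (adjugateNorm f y ^ p / jacDet f y ^ (p - 1)) ∂volume := by
        refine setLIntegral_congr_fun hSmeas fun y hy => ?_
        obtain ⟨B, hBd, hB⟩ := hinverse y hy
        have hJ := hpos y hy
        change ENNReal.ofReal |jacDet f y| * _ = _
        rw [← ENNReal.ofReal_mul (abs_nonneg _), hBd.fderiv,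
          adjugateNorm_eq_abs_jacDet_mul_norm hB, abs_of_pos hJ,
          Real.mul_rpow hJ.le (norm_nonneg _), mul_div_right_comm, ← Real.rpow_sub hJ,
          sub_sub_cancel, Real.rpow_one]
    _ = ∫⁻ y, ENNReal.ofReal (adjugateNorm f y ^ p / jacDet f y ^ (p - 1)) ∂volume := by
        rw [hrestrict]
end
end
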